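/- Let H be a real symmetric positive semidefinite n×n matrix, ρ > 0, Z = H + ρI, let F be a real m×n matrix with full row rank m (m ≤ n), and let M11 denote the top-left n×n block of the inverse of the KKT matrix K = [[Z, Fᵀ], [F, 0]]. If the kernels of H and F intersect only at the origin (ker H ∩ ker F = {0}), then ρ·‖M11‖ < 1, i.e. every eigenvalue λ of the symmetric positive semidefinite matrix M11 satisfies ρ·λ < 1. -/

import Mathlib

/-!
Applying `M11` to `v` solves the saddle-point system `H x + ρ x + Fᴴ y = v`, `F x = 0` for
`x = M11 v`. The residual `u = v - ρ x = H x + Fᴴ y` satisfies `⟪x, u⟫ = ⟪x, H x⟫ ≥ 0`, because the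
multiplier term is orthogonal to `ker F`; hence `‖v‖² ≥ ‖ρ x‖² + ‖u‖²`. If `u = 0`, then
`⟪x, H x⟫ = 0` puts `x` in `ker H ∩ ker F`, so `x = 0`. Thus `‖ρ x‖ < ‖v‖` whenever `v ≠ 0`, and
compactness of the unit ball turns this pointwise bound into a strict bound on the operator norm.
-/

open Matrix WithLp
open scoped ComplexOrder InnerProductSpace

section Norm

theorem norm_lt_norm_add_of_re_inner_nonneg {𝕜 E : Type*} [RCLike 𝕜] [NormedAddCommGroup E]
    [InnerProductSpace 𝕜 E] {x u : E} (hu : u ≠ 0) (hxu : 0 ≤ RCLike.re ⟪x, u⟫_𝕜) :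
    ‖x‖ < ‖x + u‖ := by
  have hu_pos : 0 < ‖u‖ := norm_pos_iff.2 hu
  refine lt_of_pow_lt_pow_left₀ 2 (norm_nonneg _) ?_
  calc ‖x‖ ^ 2 < ‖x‖ ^ 2 + 2 * RCLike.re ⟪x, u⟫_𝕜 + ‖u‖ ^ 2 := by linarith [pow_pos hu_pos 2]
    _ = ‖x + u‖ ^ 2 := (norm_add_sq x u).symm

theorem opNorm_lt_of_forall_norm_apply_lt {𝕜 𝕜₂ E F : Type*} [DenselyNormedField 𝕜]
    [NontriviallyNormedField 𝕜₂] [NormedAddCommGroup E] [SeminormedAddCommGroup F]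
    [NormedSpace 𝕜 E] [NormedSpace 𝕜₂ F] [ProperSpace E] {σ : 𝕜 →+* 𝕜₂} [RingHomIsometric σ]
    {f : E →SL[σ] F} {r : ℝ} (hr : 0 < r) (hf : ∀ v ≠ 0, ‖f v‖ < r * ‖v‖) : ‖f‖ < r := by
  obtain ⟨u, hu, hfu⟩ := (isCompact_closedBall (0 : E) 1).exists_sSup_image_eq
    (Metric.nonempty_closedBall.2 zero_le_one) f.continuous.norm.continuousOn
  rw [f.sSup_unitClosedBall_eq_norm] at hfu
  rw [hfu]
  rcases eq_or_ne u 0 with rfl | hu_ne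
  · simpa using hr
  · calc ‖f u‖ < r * ‖u‖ := hf u hu_ne
      _ ≤ r := mul_le_of_le_one_right hr.le (mem_closedBall_zero_iff.1 hu)

theorem norm_le_norm_toEuclideanCLM_of_mem_spectrum {𝕜 n : Type*} [RCLike 𝕜] [Fintype n]
    [DecidableEq n] {A : Matrix n n 𝕜} {μ : 𝕜} (hμ : μ ∈ spectrum 𝕜 A) :
    ‖μ‖ ≤ ‖toEuclideanCLM (𝕜 := 𝕜) A‖ := by
  rw [← AlgEquiv.spectrum_eq (toEuclideanCLM (n := n) (𝕜 := 𝕜))] at hμ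
  calc ‖μ‖ ≤ ‖toEuclideanCLM (𝕜 := 𝕜) A‖ * ‖(1 : EuclideanSpace 𝕜 n →L[𝕜] _)‖ :=
        spectrum.norm_le_norm_mul_of_mem hμ
    _ ≤ ‖toEuclideanCLM (𝕜 := 𝕜) A‖ :=
        mul_le_of_le_one_right (norm_nonneg _) ContinuousLinearMap.norm_id_le

end Norm

theorem star_dotProduct_add_conjTranspose_mulVec {R m n : Type*} [NonUnitalSemiring R] [StarRing R]
    [Fintype m] [Fintype n] {F : Matrix m n R} {x : n → R} (hFx : F *ᵥ x = 0) (w : n → R)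
    (y : m → R) : star x ⬝ᵥ (w + Fᴴ *ᵥ y) = star x ⬝ᵥ w := by
  rw [dotProduct_add, dotProduct_mulVec _ Fᴴ, ← star_mulVec, hFx, star_zero, zero_dotProduct,
    add_zero]

theorem linearIndependent_row_of_rank_eq_card {R m n : Type*} [Field R] [Fintype m] [Fintype n]
    {F : Matrix m n R} (hF : F.rank = Fintype.card m) : LinearIndependent R F.row :=
  linearIndependent_iff_card_eq_finrank_span.2 (hF.symm.trans F.rank_eq_finrank_span_row)

section KKTMatrix

variable {R m n : Type*}

/-- The KKT matrix `[[Z, Fᴴ], [F, 0]]` of the equality-constrained quadratic program with Hessian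
`Z` and constraint matrix `F`. -/
def kktMatrix [Zero R] [Star R] (Z : Matrix n n R) (F : Matrix m n R) :
    Matrix (n ⊕ m) (n ⊕ m) R :=
  fromBlocks Z Fᴴ F 0

variable [Fintype m] [Fintype n] [DecidableEq m] [DecidableEq n]

theorem isUnit_kktMatrix {K : Type*} [Field K] [PartialOrder K] [StarRing K] {Z : Matrix n n K}
    {F : Matrix m n K} (hZ : Z.PosDef) (hF : LinearIndependent K F.row) :
    IsUnit (kktMatrix Z F) := by
  let := hZ.isUnit.invertible
  have hschur : (F * Z⁻¹ * Fᴴ).PosDef :=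
    hZ.inv.mul_mul_conjTranspose_same (vecMul_injective_iff.2 hF)
  rw [kktMatrix, isUnit_fromBlocks_iff_of_invertible₁₁, zero_sub, invOf_eq_nonsing_inv]
  exact hschur.isUnit.neg

theorem kktMatrix_mul_inv_toBlocks [CommRing R] [StarRing R] {Z : Matrix n n R} {F : Matrix m n R}
    (hK : IsUnit (kktMatrix Z F)) :
    Z * (kktMatrix Z F)⁻¹.toBlocks₁₁ + Fᴴ * (kktMatrix Z F)⁻¹.toBlocks₂₁ = 1 ∧
      F * (kktMatrix Z F)⁻¹.toBlocks₁₁ = 0 := by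
  have hmul := mul_nonsing_inv _ ((isUnit_iff_isUnit_det _).1 hK)
  rw [← fromBlocks_toBlocks (kktMatrix Z F)⁻¹] at hmul
  nth_rw 1 [kktMatrix] at hmul
  rw [fromBlocks_multiply, ← fromBlocks_one, fromBlocks_inj] at hmul
  obtain ⟨h₁₁, -, h₂₁, -⟩ := hmul
  exact ⟨h₁₁, by simpa using h₂₁⟩

end KKTMatrix

section RCLike

variable {𝕜 m n : Type*} [RCLike 𝕜] [Fintype m] [Fintype n] {H : Matrix n n 𝕜} {F : Matrix m n 𝕜}

theorem mulVec_add_conjTranspose_mulVec_ne_zero (hH : H.PosSemidef)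
    (hker : Disjoint (LinearMap.ker H.mulVecLin) (LinearMap.ker F.mulVecLin)) {x : n → 𝕜}
    (hx : x ≠ 0) (hFx : F *ᵥ x = 0) (y : m → 𝕜) : H *ᵥ x + Fᴴ *ᵥ y ≠ 0 := by
  intro hu
  have hHx : H *ᵥ x = 0 := by
    rw [← hH.dotProduct_mulVec_zero_iff, ← star_dotProduct_add_conjTranspose_mulVec hFx _ y, hu,
      dotProduct_zero]
  exact hx (Submodule.disjoint_def.1 hker x hHx hFx)

theorem norm_smul_lt_norm_smul_add_of_mulVec_eq_zero (hH : H.PosSemidef)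
    (hker : Disjoint (LinearMap.ker H.mulVecLin) (LinearMap.ker F.mulVecLin)) {ρ : ℝ} (hρ : 0 ≤ ρ)
    {x : n → 𝕜} (hx : x ≠ 0) (hFx : F *ᵥ x = 0) (y : m → 𝕜) :
    ‖toLp 2 (ρ • x)‖ < ‖toLp 2 (ρ • x + (H *ᵥ x + Fᴴ *ᵥ y))‖ := by
  rw [toLp_add]
  refine norm_lt_norm_add_of_re_inner_nonneg (𝕜 := 𝕜) ?_ ?_
  · exact (toLp_eq_zero 2).not.2 (mulVec_add_conjTranspose_mulVec_ne_zero hH hker hx hFx y)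
  · have hinner : 0 ≤ star x ⬝ᵥ (H *ᵥ x + Fᴴ *ᵥ y) := by
      rw [star_dotProduct_add_conjTranspose_mulVec hFx]
      exact hH.dotProduct_mulVec_nonneg x
    rw [EuclideanSpace.inner_toLp_toLp, dotProduct_comm, star_smul, star_trivial, smul_dotProduct,
      RCLike.smul_re]
    exact mul_nonneg hρ (RCLike.nonneg_iff.1 hinner).1

variable [DecidableEq m] [DecidableEq n]

theorem norm_smul_kktMatrix_inv_toBlocks₁₁_mulVec_lt (hH : H.PosSemidef)
    (hker : Disjoint (LinearMap.ker H.mulVecLin) (LinearMap.ker F.mulVecLin)) {ρ : ℝ} (hρ : 0 ≤ ρ)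
    (hK : IsUnit (kktMatrix (H + ρ • (1 : Matrix n n 𝕜)) F)) {v : n → 𝕜} (hv : v ≠ 0) :
    ‖toLp 2 (ρ • ((kktMatrix (H + ρ • (1 : Matrix n n 𝕜)) F)⁻¹.toBlocks₁₁ *ᵥ v))‖
      < ‖toLp 2 v‖ := by
  obtain ⟨hstat, hfeas⟩ := kktMatrix_mul_inv_toBlocks hK
  set K := kktMatrix (H + ρ • (1 : Matrix n n 𝕜)) F
  set x := K⁻¹.toBlocks₁₁ *ᵥ v with hx_def
  set y := K⁻¹.toBlocks₂₁ *ᵥ v with hy_def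
  have hFx : F *ᵥ x = 0 := by rw [hx_def, mulVec_mulVec, hfeas, zero_mulVec]
  have hv_eq : v = ρ • x + (H *ᵥ x + Fᴴ *ᵥ y) := by
    calc v = (H + ρ • (1 : Matrix n n 𝕜)) *ᵥ x + Fᴴ *ᵥ y := by
          rw [hx_def, hy_def, mulVec_mulVec, mulVec_mulVec, ← add_mulVec, hstat, one_mulVec]
      _ = ρ • x + (H *ᵥ x + Fᴴ *ᵥ y) := by
          rw [add_mulVec, smul_mulVec, one_mulVec, add_comm (H *ᵥ x), add_assoc]
  rcases eq_or_ne x 0 with hx | hx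
  · simpa [hx] using hv
  · rw [hv_eq]
    exact norm_smul_lt_norm_smul_add_of_mulVec_eq_zero hH hker hρ hx hFx y

theorem kkt_M11_strict_norm_bound_general (hH : H.PosSemidef) {ρ : ℝ} (hρ : 0 < ρ)
    (hF : LinearIndependent 𝕜 F.row)
    (hker : Disjoint (LinearMap.ker H.mulVecLin) (LinearMap.ker F.mulVecLin)) :
    ρ * ‖toEuclideanCLM (𝕜 := 𝕜) (kktMatrix (H + ρ • (1 : Matrix n n 𝕜)) F)⁻¹.toBlocks₁₁‖ < 1 ∧
      ∀ μ ∈ spectrum 𝕜 (kktMatrix (H + ρ • (1 : Matrix n n 𝕜)) F)⁻¹.toBlocks₁₁, ρ * ‖μ‖ < 1 := by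
  have hK := isUnit_kktMatrix (.posSemidef_add hH (PosDef.one.smul hρ)) hF
  set M := (kktMatrix (H + ρ • (1 : Matrix n n 𝕜)) F)⁻¹.toBlocks₁₁
  have hM : ρ * ‖toEuclideanCLM (𝕜 := 𝕜) M‖ < 1 := by
    rw [← lt_inv_mul_iff₀ hρ, mul_one]
    refine opNorm_lt_of_forall_norm_apply_lt (inv_pos.2 hρ) fun v hv ↦ ?_
    have hlt := norm_smul_kktMatrix_inv_toBlocks₁₁_mulVec_lt hH hker hρ.le hK
      ((ofLp_eq_zero 2).not.2 hv)
    rw [toLp_smul, norm_smul_of_nonneg hρ.le, toLp_ofLp] at hlt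
    exact (lt_inv_mul_iff₀ hρ).2 hlt
  refine ⟨hM, fun μ hμ ↦ ?_⟩
  calc ρ * ‖μ‖ ≤ ρ * ‖toEuclideanCLM (𝕜 := 𝕜) M‖ := by
        gcongr; exact norm_le_norm_toEuclideanCLM_of_mem_spectrum hμ
    _ < 1 := hM

end RCLike

/-- With `Z = H + ρI`, `F` of full row rank, and `M11` the top-left block of
the inverse of the KKT matrix `[[Z, Fᵀ], [F, 0]]`, if `ker H ∩ ker F = {0}` then
`ρ‖M11‖ < 1` (spectral norm), equivalently every eigenvalue `λ` of the positive
semidefinite matrix `M11` satisfies `ρλ < 1`. -/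
theorem kkt_M11_strict_norm_bound {n m : ℕ} (H : Matrix (Fin n) (Fin n) ℝ)
    (hH : H.PosSemidef) (ρ : ℝ) (hρ : 0 < ρ)
    (F : Matrix (Fin m) (Fin n) ℝ) (hmn : m ≤ n) (hF : F.rank = m)
    (hker : LinearMap.ker H.mulVecLin ⊓ LinearMap.ker F.mulVecLin = ⊥)
    (Z : Matrix (Fin n) (Fin n) ℝ)
    (hZdef : Z = H + ρ • (1 : Matrix (Fin n) (Fin n) ℝ))
    (M11 : Matrix (Fin n) (Fin n) ℝ)
    (hM11 : M11 = ((Matrix.fromBlocks Z F.transpose F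
      (0 : Matrix (Fin m) (Fin m) ℝ))⁻¹).toBlocks₁₁) :
    ρ * ‖Matrix.toEuclideanCLM (𝕜 := ℝ) M11‖ < 1 ∧
      ∀ lam ∈ spectrum ℝ M11, ρ * lam < 1 := by
  rw [← conjTranspose_eq_transpose_of_trivial] at hM11
  subst hZdef hM11
  obtain ⟨hnorm, hspec⟩ := kkt_M11_strict_norm_bound_general hH hρ
    (linearIndependent_row_of_rank_eq_card (by simpa using hF)) (disjoint_iff.2 hker)
  exact ⟨hnorm, fun lam hlam ↦
    (mul_le_mul_of_nonneg_left (Real.le_norm_self lam) hρ.le).trans_lt (hspec lam hlam)⟩
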